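/- Assume the curve setup with counterclockwise orientation. Let x ∈ ℝ² be a point of the exterior domain, i.e. x is not in the range of l and, identifying ℝ² with ℂ via γ(s) = l₁(s) + i·l₂(s) and x with a complex number, ∫₀^L γ'(t)/(γ(t) − x) dt = 0. Let s₀ ∈ ℝ and y = l(s₀). Then π·(x − y)^⊥/‖x − y‖² = lim_{ε→0⁺} ∫_{{t ∈ [s₀ − L/2, s₀ + L/2] : |t − s₀| ≥ ε}} (((y − l(t))·l'(t))/‖y − l(t)‖²)·((x − l(t))/‖x − l(t)‖²) dt − ∫₀^L h(t)·((x − l(t))^⊥/‖x − l(t)‖²) dt, where h(t) = ((y − l(t))·n(t))/‖y − l(t)‖² for l(t) ≠ y, extended continuously by h(t) = (1/2)·l''(s₀)·n(s₀) when l(t) = y. -/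

import Mathlib

open Real MeasureTheory Filter Topology

/-- Dot product of two points of the plane `ℝ² ≃ ℂ`. -/
noncomputable def dotR (z w : ℂ) : ℝ := z.re * w.re + z.im * w.im

/-- The unit normal vector `n(s) = (l₂'(s), -l₁'(s))` of a curve `l`. -/
noncomputable def normalv (l : ℝ → ℂ) (s : ℝ) : ℂ := -Complex.I * deriv l s

open Classical in
/-- The double layer kernel `t ↦ ((l(s₀) - l(t))·n(t))/‖l(s₀) - l(t)‖²`, extended
continuously through the diagonal by `(1/2)·l''(s₀)·n(s₀)`. -/
noncomputable def Kdl (l : ℝ → ℂ) (s t : ℝ) : ℝ :=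
  if l s = l t then (1/2) * dotR (deriv (deriv l) s) (normalv l s)
  else dotR (l s - l t) (normalv l t) / ‖l s - l t‖ ^ 2

/-- Difference quotient of the curve. -/
noncomputable def DD (l : ℝ → ℂ) (s u : ℝ) : ℂ := ∫ θ in (0:ℝ)..1, deriv l (s + θ * u)

/-- Derivative of the difference quotient. -/
noncomputable def DU (l : ℝ → ℂ) (s u : ℝ) : ℂ :=
  ∫ θ in (0:ℝ)..1, (θ : ℂ) * deriv (deriv l) (s + θ * u)

lemma sm1 {l : ℝ → ℂ} (hsm : ContDiff ℝ (⊤ : ℕ∞) l) : ContDiff ℝ (⊤ : ℕ∞) (deriv l) := by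
  have := (contDiff_infty_iff_deriv (𝕜 := ℝ) (f := l)).1 hsm
  exact this.2

lemma sm_has {l : ℝ → ℂ} (hsm : ContDiff ℝ (⊤ : ℕ∞) l) (t : ℝ) :
    HasDerivAt l (deriv l t) t :=
  ((hsm.differentiable (by simp)) t).hasDerivAt

lemma DD_cont {l : ℝ → ℂ} (hsm : ContDiff ℝ (⊤ : ℕ∞) l) :
    Continuous (fun p : ℝ × ℝ => DD l p.1 p.2) := by
  unfold DD
  have h := (sm1 hsm).continuous
  apply intervalIntegral.continuous_parametric_intervalIntegral_of_continuous'
  unfold Function.uncurry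
  fun_prop

lemma DU_cont {l : ℝ → ℂ} (hsm : ContDiff ℝ (⊤ : ℕ∞) l) :
    Continuous (fun p : ℝ × ℝ => DU l p.1 p.2) := by
  unfold DU
  have h := (sm1 (sm1 hsm)).continuous
  apply intervalIntegral.continuous_parametric_intervalIntegral_of_continuous'
  unfold Function.uncurry
  fun_prop

lemma has_line {l : ℝ → ℂ} (hsm : ContDiff ℝ (⊤ : ℕ∞) l) (s u θ : ℝ) :
    HasDerivAt (fun θ : ℝ => l (s + θ * u)) ((u : ℂ) * deriv l (s + θ * u)) θ := by
  have h1 : HasDerivAt (fun θ : ℝ => s + θ * u) u θ := by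
    simpa using ((hasDerivAt_id θ).mul_const u).const_add s
  have := (sm_has hsm (s + θ * u)).scomp θ h1
  simpa [Function.comp_def] using this

lemma DD_mul {l : ℝ → ℂ} (hsm : ContDiff ℝ (⊤ : ℕ∞) l) (s u : ℝ) :
    (u : ℂ) * DD l s u = l (s + u) - l s := by
  unfold DD
  rw [← intervalIntegral.integral_const_mul]
  have h := (sm1 hsm).continuous
  rw [intervalIntegral.integral_eq_sub_of_hasDerivAt (f := fun θ : ℝ => l (s + θ * u))
    (fun θ _ => has_line hsm s u θ)
    (Continuous.intervalIntegrable (by fun_prop) _ _)]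
  simp

lemma DU_mul {l : ℝ → ℂ} (hsm : ContDiff ℝ (⊤ : ℕ∞) l) (s u : ℝ) :
    (u : ℂ) * DU l s u = deriv l (s + u) - DD l s u := by
  unfold DU DD
  have h := (sm1 hsm).continuous
  have h2 := (sm1 (sm1 hsm)).continuous
  have key : ∫ θ in (0:ℝ)..1, (deriv l (s + θ * u) +
      (u:ℂ) * ((θ : ℂ) * deriv (deriv l) (s + θ * u))) = deriv l (s + u) := by
    rw [intervalIntegral.integral_eq_sub_of_hasDerivAt
      (f := fun θ : ℝ => (θ : ℂ) * deriv l (s + θ * u)) (fun θ _ => ?_)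
      (Continuous.intervalIntegrable (by fun_prop) _ _)]
    · simp
    · have := (Complex.ofRealCLM.hasDerivAt (x := θ)).mul (has_line (sm1 hsm) s u θ)
      refine HasDerivAt.congr_deriv (f := fun θ : ℝ => (θ : ℂ) * deriv l (s + θ * u)) this ?_
      simp; ring
  rw [intervalIntegral.integral_add (Continuous.intervalIntegrable (by fun_prop) _ _)
    (Continuous.intervalIntegrable (by fun_prop) _ _),
    intervalIntegral.integral_const_mul] at key
  rw [← key]; ring

lemma DD_has {l : ℝ → ℂ} (hsm : ContDiff ℝ (⊤ : ℕ∞) l) (s u : ℝ) :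
    HasDerivAt (DD l s) (DU l s u) u := by
  have c1 : Continuous (DD l s) := (DD_cont hsm).comp (Continuous.prodMk_right s)
  have c2 : Continuous (DU l s) := (DU_cont hsm).comp (Continuous.prodMk_right s)
  have hne : ∀ y : ℝ, y ≠ 0 → HasDerivAt (DD l s) (DU l s y) y := by
    intro y hy
    have hy' : (y : ℂ) ≠ 0 := by exact_mod_cast hy
    have e : DD l s =ᶠ[𝓝 y] fun u : ℝ => (l (s + u) - l s) / (u : ℂ) := by
      filter_upwards [isOpen_ne.mem_nhds hy] with u hu
      have hu' : (u : ℂ) ≠ 0 := by exact_mod_cast hu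
      rw [← DD_mul hsm]; field_simp
    refine HasDerivAt.congr_of_eventuallyEq ?_ e
    have h1 := ((sm_has hsm (s + y)).comp_const_add s y).sub_const (l s)
    have := h1.div (Complex.ofRealCLM.hasDerivAt (x := y)) (by simpa using hy')
    refine HasDerivAt.congr_deriv (f := fun u : ℝ => (l (s + u) - l s) / (u : ℂ)) this ?_
    rw [← DD_mul hsm]
    have := DU_mul hsm s y
    have h3 : deriv l (s + y) = (y : ℂ) * DU l s y + DD l s y := by rw [this]; ring
    rw [h3]; simp; field_simp; ring
  by_cases hu : u = 0
  · subst hu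
    exact hasDerivAt_of_hasDerivAt_of_ne (fun y hy => hne y hy) c1.continuousAt c2.continuousAt
  · exact hne u hu

lemma DD_ne {L : ℝ} (hL : 0 < L) {l : ℝ → ℂ}
    (hsm : ContDiff ℝ (⊤ : ℕ∞) l) (hper : ∀ s, l (s + L) = l s)
    (harc : ∀ s, ‖deriv l s‖ = 1) (hinj : Set.InjOn l (Set.Ico 0 L))
    (s u : ℝ) (hu : |u| < L) : DD l s u ≠ 0 := by
  by_cases h0 : u = 0
  · subst h0
    have : DD l s 0 = deriv l s := by simp [DD]
    rw [this, ← norm_ne_zero_iff, harc]; simp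
  intro hD
  have h1 : l (s + u) = l s := by
    have := DD_mul hsm s u
    rw [hD] at this
    simpa [sub_eq_zero, eq_comm] using this
  have hp : Function.Periodic l L := hper
  have hmod : ∀ a, l (toIcoMod hL 0 a) = l a := by
    intro a
    rw [toIcoMod]
    exact hp.sub_zsmul_eq _
  have e : toIcoMod hL 0 (s + u) = toIcoMod hL 0 s := by
    apply hinj (by simpa using toIcoMod_mem_Ico hL 0 (s+u))
      (by simpa using toIcoMod_mem_Ico hL 0 s)
    rw [hmod, hmod, h1]
  rw [toIcoMod, toIcoMod] at e
  set m := toIcoDiv hL 0 (s+u)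
  set k := toIcoDiv hL 0 s
  have e2 : u = ((m - k : ℤ) : ℝ) * L := by
    simp only [zsmul_eq_mul] at e
    push_cast; linarith
  have hz : m - k ≠ 0 := by
    intro hz; rw [hz] at e2; simp at e2; exact h0 e2
  have h1' : (1:ℝ) ≤ |((m - k : ℤ) : ℝ)| := by
    rw [← Int.cast_abs]; exact_mod_cast Int.one_le_abs hz
  rw [e2, abs_mul, abs_of_pos hL] at hu
  nlinarith

/-- Clamp to `[-L/2, L/2]`. -/
noncomputable def cl (L u : ℝ) : ℝ := max (-(L/2)) (min u (L/2))

lemma cl_eq {L u : ℝ} (h : u ∈ Set.Icc (-(L/2)) (L/2)) : cl L u = u := by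
  unfold cl; rw [min_eq_left h.2, max_eq_right h.1]

lemma cl_abs {L : ℝ} (hL : 0 < L) (u : ℝ) : |cl L u| < L := by
  unfold cl
  rw [abs_lt]
  constructor
  · apply lt_of_lt_of_le _ (le_max_left _ _); linarith
  · apply max_lt (by linarith)
    apply lt_of_le_of_lt (min_le_right _ _); linarith

/-- Regular part of the Cauchy kernel. -/
noncomputable def GG (L : ℝ) (l : ℝ → ℂ) (s u : ℝ) : ℂ := DU l s (cl L u) / DD l s (cl L u)

/-- Principal value of the Cauchy kernel. -/
noncomputable def PP (L : ℝ) (l : ℝ → ℂ) (s : ℝ) : ℂ := ∫ u in (-(L/2))..(L/2), GG L l s u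

section
variable {L : ℝ} (hL : 0 < L) {l : ℝ → ℂ}
    (hsm : ContDiff ℝ (⊤ : ℕ∞) l) (hper : ∀ s, l (s + L) = l s)
    (harc : ∀ s, ‖deriv l s‖ = 1) (hinj : Set.InjOn l (Set.Ico 0 L))

lemma GG_cont (hL : 0 < L)
    (hsm : ContDiff ℝ (⊤ : ℕ∞) l) (hper : ∀ s, l (s + L) = l s)
    (harc : ∀ s, ‖deriv l s‖ = 1) (hinj : Set.InjOn l (Set.Ico 0 L)) :
    Continuous (fun p : ℝ × ℝ => GG L l p.1 p.2) := by
  unfold GG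
  have hc : Continuous (fun p : ℝ × ℝ => (p.1, cl L p.2)) := by
    unfold cl; fun_prop
  exact ((DU_cont hsm).comp hc).div ((DD_cont hsm).comp hc)
    (fun p => DD_ne hL hsm hper harc hinj _ _ (cl_abs hL _))

lemma GG_cont' (hL : 0 < L)
    (hsm : ContDiff ℝ (⊤ : ℕ∞) l) (hper : ∀ s, l (s + L) = l s)
    (harc : ∀ s, ‖deriv l s‖ = 1) (hinj : Set.InjOn l (Set.Ico 0 L)) (s : ℝ) :
    Continuous (GG L l s) := by
  have h := GG_cont hL hsm hper harc hinj
  exact h.comp (g := fun p : ℝ × ℝ => GG L l p.1 p.2) (f := fun u => (s, u)) (by fun_prop)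

lemma PP_cont (hL : 0 < L)
    (hsm : ContDiff ℝ (⊤ : ℕ∞) l) (hper : ∀ s, l (s + L) = l s)
    (harc : ∀ s, ‖deriv l s‖ = 1) (hinj : Set.InjOn l (Set.Ico 0 L)) :
    Continuous (PP L l) := by
  unfold PP
  apply intervalIntegral.continuous_parametric_intervalIntegral_of_continuous'
  exact GG_cont hL hsm hper harc hinj

lemma l_half (hper : ∀ s, l (s + L) = l s) (s : ℝ) : l (s + -(L/2)) = l (s + L/2) := by
  rw [← hper]; congr 1; ring

lemma DD_half (hL : 0 < L)
    (hsm : ContDiff ℝ (⊤ : ℕ∞) l) (hper : ∀ s, l (s + L) = l s) (s : ℝ) :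
    DD l s (-(L/2)) = - DD l s (L/2) := by
  have h1 := DD_mul hsm s (L/2)
  have h2 := DD_mul hsm s (-(L/2))
  rw [l_half hper, ← h1] at h2
  have hLc : (L : ℂ) ≠ 0 := by exact_mod_cast hL.ne'
  push_cast at h2
  have : (L/2 : ℂ) * (DD l s (-(L/2)) + DD l s (L/2)) = 0 := by linear_combination -h2
  have := (mul_eq_zero.1 this).resolve_left (by simpa using hLc)
  linear_combination this

lemma exp_PP (hL : 0 < L)
    (hsm : ContDiff ℝ (⊤ : ℕ∞) l) (hper : ∀ s, l (s + L) = l s)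
    (harc : ∀ s, ‖deriv l s‖ = 1) (hinj : Set.InjOn l (Set.Ico 0 L)) (s : ℝ) :
    Complex.exp (PP L l s) = -1 := by
  have hG := GG_cont' hL hsm hper harc hinj s
  set F : ℝ → ℂ := fun u => ∫ v in (-(L/2))..u, GG L l s v with hF
  have hFd : ∀ u, HasDerivAt F (GG L l s u) u := fun u => hG.integral_hasStrictDerivAt _ _ |>.hasDerivAt
  have hd : ∀ u, HasDerivAt (fun u => DD l s u * Complex.exp (-F u))
      (DU l s u * Complex.exp (-F u) + DD l s u * (Complex.exp (-F u) * -(GG L l s u))) u :=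
    fun u => (DD_has hsm s u).mul ((hFd u).neg.cexp)
  have hconst := constant_of_has_deriv_right_zero
    (f := fun u => DD l s u * Complex.exp (-F u)) (a := -(L/2)) (b := L/2)
    (fun u _ => (hd u).continuousAt.continuousWithinAt) (fun u hu => by
      have h := hd u
      have hz : (DU l s u * Complex.exp (-F u) +
          DD l s u * (Complex.exp (-F u) * -(GG L l s u))) = 0 := by
        have hcl := cl_eq (L := L) (u := u) ⟨hu.1, hu.2.le⟩
        have hne := DD_ne hL hsm hper harc hinj s _ (cl_abs hL u)
        unfold GG
        rw [hcl] at hne ⊢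
        field_simp; ring
      rw [hz] at h
      exact h.hasDerivWithinAt) (L/2) ⟨by linarith, le_rfl⟩
  have hF0 : F (-(L/2)) = 0 := by simp [hF]
  have hF1 : F (L/2) = PP L l s := rfl
  rw [hF0, hF1, DD_half hL hsm hper] at hconst
  have hne := DD_ne hL hsm hper harc hinj s (L/2) (by rw [abs_of_pos (by linarith)]; linarith)
  simp only [neg_zero, Complex.exp_zero, mul_one] at hconst
  have h3 : Complex.exp (-PP L l s) = -1 := by
    apply mul_left_cancel₀ hne; rw [hconst]; ring
  rw [Complex.exp_neg] at h3
  rw [← inv_inv (Complex.exp (PP L l s)), h3]; norm_num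

lemma per_deriv (hper : ∀ s, l (s + L) = l s) (s : ℝ) : deriv l (s + L) = deriv l s := by
  rw [← deriv_comp_add_const]
  congr 1; funext t; exact hper t

lemma wind_shift (hper : ∀ s, l (s + L) = l s) (z : ℂ) (s : ℝ) :
    ∫ t in (0:ℝ)..L, deriv l t / (l t - z) =
      ∫ u in (-(L/2))..(L/2), deriv l (s + u) / (l (s + u) - z) := by
  have hp : Function.Periodic (fun t => deriv l t / (l t - z)) L := by
    intro t; simp only [hper, per_deriv hper]
  have h := hp.intervalIntegral_add_eq 0 (s - L/2)
  rw [zero_add] at h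
  rw [h, intervalIntegral.integral_comp_add_left (fun t => deriv l t / (l t - z))]
  congr 1; ring

lemma exists_nearest (hL : 0 < L) (hsm : ContDiff ℝ (⊤ : ℕ∞) l)
    (hper : ∀ s, l (s + L) = l s) (z : ℂ) : ∃ s, ∀ t, ‖l s - z‖ ≤ ‖l t - z‖ := by
  have hc : Continuous (fun t => ‖l t - z‖) := by
    have := hsm.continuous; fun_prop
  obtain ⟨s, -, hs⟩ := isCompact_Icc.exists_isMinOn
    (Set.nonempty_Icc.2 hL.le) (hc.continuousOn (s := Set.Icc 0 L))
  refine ⟨s, fun t => ?_⟩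
  have hp : Function.Periodic l L := hper
  obtain ⟨y, hy, hyt⟩ := hp.exists_mem_Ico₀ hL t
  rw [hyt]
  exact hs (Set.Ico_subset_Icc_self hy)

lemma re_div_nonneg' {a b : ℂ} (h : 0 ≤ a.re * b.re + a.im * b.im) : 0 ≤ (a / b).re := by
  rw [Complex.div_re, ← add_div]
  exact div_nonneg h (Complex.normSq_nonneg _)

lemma slit_of {w : ℂ} (h : 0 ≤ w.re) (h0 : w ≠ 0) : w ∈ Complex.slitPlane := by
  rw [Complex.mem_slitPlane_iff]
  by_contra hc
  push Not at hc
  exact h0 (Complex.ext (le_antisymm hc.1 h) hc.2)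

lemma nearest (hL : 0 < L)
    (hsm : ContDiff ℝ (⊤ : ℕ∞) l) (hper : ∀ s, l (s + L) = l s)
    (harc : ∀ s, ‖deriv l s‖ = 1) (hinj : Set.InjOn l (Set.Ico 0 L))
    (z : ℂ) (hz : ∀ s, l s ≠ z) :
    ∃ s, |(∫ t in (0:ℝ)..L, deriv l t / (l t - z)).im - (PP L l s).im| ≤ π := by
  obtain ⟨s, hs⟩ := exists_nearest hL hsm hper z
  refine ⟨s, ?_⟩
  have hG := GG_cont' hL hsm hper harc hinj s
  have hlc := hsm.continuous
  have hlc1 := (sm1 hsm).continuous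
  have hW : Continuous fun u => deriv l (s + u) / (l (s + u) - z) :=
    Continuous.div (by fun_prop) (by fun_prop) (fun u => sub_ne_zero.2 (hz _))
  set Q : ℝ → ℂ := fun u => (l (s + u) - z) / DD l s u with hQ
  have habs : ∀ u ∈ Set.Icc (-(L/2)) (L/2), |u| < L := by
    intro u hu; rw [← cl_eq hu]; exact cl_abs hL u
  have hDne : ∀ u ∈ Set.Icc (-(L/2)) (L/2), DD l s u ≠ 0 := fun u hu =>
    DD_ne hL hsm hper harc hinj s u (habs u hu)
  have hQne : ∀ u ∈ Set.Icc (-(L/2)) (L/2), Q u ≠ 0 := fun u hu =>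
    div_ne_zero (sub_ne_zero.2 (hz _)) (hDne u hu)
  have hQd : ∀ u ∈ Set.Icc (-(L/2)) (L/2), HasDerivAt Q
      (Q u * (deriv l (s + u) / (l (s + u) - z) - GG L l s u)) u := by
    intro u hu
    have h1 := ((sm_has hsm (s + u)).comp_const_add s u).sub_const z
    refine (h1.div (DD_has hsm s u) (hDne u hu)).congr_deriv ?_
    have a1 := hDne u hu
    have a2 := sub_ne_zero.2 (hz (s + u))
    simp only [hQ, GG, cl_eq hu]
    field_simp
  -- sign of the real part
  have key : ∀ u : ℝ, 0 ≤ u * ((l (s+u) - z).re * (DD l s u).re +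
      (l (s+u) - z).im * (DD l s u).im) := by
    intro u
    have h1 := hs (s + u)
    have h2 := DD_mul hsm s u
    have h3 : ‖l s - z‖ ^ 2 ≤ ‖l (s+u) - z‖ ^ 2 := by gcongr
    rw [← Complex.normSq_eq_norm_sq, ← Complex.normSq_eq_norm_sq, Complex.normSq_apply,
      Complex.normSq_apply] at h3
    have e1 := congrArg Complex.re h2
    have e2 := congrArg Complex.im h2
    simp at e1 e2
    simp only [Complex.sub_re, Complex.sub_im] at h3 ⊢
    have : u * (((l (s + u)).re - z.re) * (DD l s u).re + ((l (s + u)).im - z.im) * (DD l s u).im)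
      = ((l (s + u)).re - z.re) * ((l (s+u)).re - (l s).re)
        + ((l (s + u)).im - z.im) * ((l (s+u)).im - (l s).im) := by
      rw [← e1, ← e2]; ring
    rw [this]
    nlinarith [sq_nonneg ((l (s+u)).re - (l s).re), sq_nonneg ((l (s+u)).im - (l s).im)]
  have hpos0 : ∀ u > 0, 0 ≤ (Q u).re := fun u hu =>
    re_div_nonneg' (nonneg_of_mul_nonneg_right (key u) hu)
  have hneg0 : ∀ u < 0, 0 ≤ (-Q u).re := fun u hu => by
    have : -Q u = (-(l (s+u) - z)) / DD l s u := by simp only [hQ]; ring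
    rw [this]
    apply re_div_nonneg'
    have := key u
    simp only [Complex.neg_re, Complex.neg_im]
    nlinarith
  have h0mem : (0:ℝ) ∈ Set.Icc (-(L/2)) (L/2) := ⟨by linarith, by linarith⟩
  have hQc0 : ContinuousAt Q 0 := (hQd 0 h0mem).continuousAt
  have hp00 : 0 ≤ (Q 0).re := by
    have : Tendsto (fun u => (Q u).re) (𝓝[>] 0) (𝓝 (Q 0).re) :=
      (Complex.continuous_re.continuousAt.comp hQc0).tendsto.mono_left nhdsWithin_le_nhds
    exact ge_of_tendsto this (by filter_upwards [self_mem_nhdsWithin] with u hu using hpos0 u hu)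
  have hn00 : 0 ≤ (-Q 0).re := by
    have : Tendsto (fun u => (-Q u).re) (𝓝[<] 0) (𝓝 (-Q 0).re) :=
      (Complex.continuous_re.continuousAt.comp hQc0.neg).tendsto.mono_left nhdsWithin_le_nhds
    exact ge_of_tendsto this (by filter_upwards [self_mem_nhdsWithin] with u hu using hneg0 u hu)
  have hpos : ∀ u ≥ 0, 0 ≤ (Q u).re := fun u hu => by
    rcases hu.eq_or_lt with h | h
    · subst h; exact hp00
    · exact hpos0 u h
  have hneg : ∀ u ≤ 0, 0 ≤ (-Q u).re := fun u hu => by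
    rcases hu.eq_or_lt with h | h
    · subst h; exact hn00
    · exact hneg0 u h
  have hcont : Continuous fun u => deriv l (s + u) / (l (s + u) - z) - GG L l s u := hW.sub hG
  have I1 : ∫ u in (0:ℝ)..(L/2), (deriv l (s + u) / (l (s + u) - z) - GG L l s u) =
      Complex.log (Q (L/2)) - Complex.log (Q 0) := by
    refine intervalIntegral.integral_eq_sub_of_hasDerivAt (f := fun u => Complex.log (Q u))
      (fun u hu => ?_) (hcont.intervalIntegrable _ _)
    rw [Set.uIcc_of_le (by linarith)] at hu
    have hu' : u ∈ Set.Icc (-(L/2)) (L/2) := ⟨by linarith [hu.1], hu.2⟩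
    refine ((hQd u hu').clog_real (slit_of (hpos u hu.1) (hQne u hu'))).congr_deriv ?_
    have := hQne u hu'
    field_simp
  have I2 : ∫ u in (-(L/2))..0, (deriv l (s + u) / (l (s + u) - z) - GG L l s u) =
      Complex.log (-Q 0) - Complex.log (-Q (-(L/2))) := by
    refine intervalIntegral.integral_eq_sub_of_hasDerivAt (f := fun u => Complex.log (-Q u))
      (fun u hu => ?_) (hcont.intervalIntegrable _ _)
    rw [Set.uIcc_of_le (by linarith)] at hu
    have hu' : u ∈ Set.Icc (-(L/2)) (L/2) := ⟨hu.1, by linarith [hu.2]⟩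
    refine ((hQd u hu').neg.clog_real
      (slit_of (hneg u hu.2) (neg_ne_zero.2 (hQne u hu')))).congr_deriv ?_
    have := hQne u hu'
    simp only [Pi.neg_apply]
    field_simp
  have hend : -Q (-(L/2)) = Q (L/2) := by
    simp only [hQ, l_half hper, DD_half hL hsm hper]
    rw [div_neg, neg_neg]
  have htot : (∫ t in (0:ℝ)..L, deriv l t / (l t - z)) - PP L l s =
      Complex.log (-Q 0) - Complex.log (Q 0) := by
    rw [wind_shift hper z s, PP, ← intervalIntegral.integral_sub (hW.intervalIntegrable _ _)
      (hG.intervalIntegrable _ _),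
      ← intervalIntegral.integral_add_adjacent_intervals (b := 0)
      (hcont.intervalIntegrable _ _) (hcont.intervalIntegrable _ _), I1, I2, hend]
    ring
  rw [← Complex.sub_im, htot, Complex.sub_im, Complex.log_im, Complex.log_im]
  have b1 := Complex.abs_arg_le_pi_div_two_iff.2 hp00
  have b2 := Complex.abs_arg_le_pi_div_two_iff.2 hn00
  rw [abs_le] at *
  constructor <;> linarith [b1.1, b1.2, b2.1, b2.2]

lemma PP_eq (hL : 0 < L)
    (hsm : ContDiff ℝ (⊤ : ℕ∞) l) (hper : ∀ s, l (s + L) = l s)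
    (harc : ∀ s, ‖deriv l s‖ = 1) (hinj : Set.InjOn l (Set.Ico 0 L))
    (horient : ∃ z₀ : ℂ, (∀ s, l s ≠ z₀) ∧
      (∫ t in (0:ℝ)..L, deriv l t / (l t - z₀)) = 2 * (π : ℂ) * Complex.I)
    (x : ℂ) (hx : ∀ s, l s ≠ x)
    (hwind : (∫ t in (0:ℝ)..L, deriv l t / (l t - x)) = 0) (s : ℝ) :
    PP L l s = π * Complex.I := by
  obtain ⟨z₀, hz₀, hw⟩ := horient
  obtain ⟨s1, h1⟩ := nearest hL hsm hper harc hinj z₀ hz₀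
  obtain ⟨s2, h2⟩ := nearest hL hsm hper harc hinj x hx
  rw [hw] at h1
  rw [hwind] at h2
  simp at h1 h2
  rw [abs_le] at h1 h2
  have hform : ∀ t, ∃ n : ℤ, PP L l t = π * Complex.I + n * (2 * π * Complex.I) := by
    intro t
    have := exp_PP hL hsm hper harc hinj t
    rw [← Complex.exp_pi_mul_I] at this
    exact Complex.exp_eq_exp_iff_exists_int.1 this
  have hc : Continuous fun t => (PP L l t).im :=
    Complex.continuous_im.comp (PP_cont hL hsm hper harc hinj)
  have himform : ∀ t, ∃ n : ℤ, (PP L l t).im = π + n * (2 * π) := by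
    intro t
    obtain ⟨n, hn⟩ := hform t
    exact ⟨n, by rw [hn]; simp⟩
  have hno : ∀ t (k : ℤ), (PP L l t).im ≠ 2 * k * π := by
    intro t k hk
    obtain ⟨n, hn⟩ := himform t
    rw [hn] at hk
    have : (1 + 2 * n : ℝ) = 2 * k := by
      apply mul_right_cancel₀ pi_ne_zero; linarith
    have : (1 + 2 * n : ℤ) = 2 * k := by exact_mod_cast this
    omega
  have hnolt : ∀ (a b : ℝ) (k : ℤ), (PP L l a).im ≤ 2 * k * π → 2 * k * π ≤ (PP L l b).im →
      False := by
    intro a b k ha hb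
    obtain ⟨c, hc⟩ := mem_range_of_exists_le_of_exists_ge hc ⟨a, ha⟩ ⟨b, hb⟩
    exact hno c k hc
  obtain ⟨n, hn⟩ := hform s
  have him : (PP L l s).im = π + n * (2 * π) := by rw [hn]; simp
  have hpi := pi_pos
  have hn0 : n = 0 := by
    rcases lt_trichotomy n 0 with h | h | h
    · exfalso
      have : (n:ℝ) ≤ -1 := by exact_mod_cast (by omega : n ≤ -1)
      apply hnolt s s1 0
      · rw [him]; push_cast; nlinarith
      · push_cast; linarith [h1.1, h1.2]
    · exact h
    · exfalso
      have : (1:ℝ) ≤ n := by exact_mod_cast (by omega : 1 ≤ n)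
      apply hnolt s2 s 1
      · push_cast; linarith [h2.1, h2.2]
      · rw [him]; push_cast; nlinarith
  rw [hn, hn0]; simp
end

/-- The truncated interval. -/
def SS (L s₀ ε : ℝ) : Set ℝ := {t : ℝ | t ∈ Set.Icc (s₀ - L/2) (s₀ + L/2) ∧ ε ≤ |t - s₀|}

lemma SS_closed (L s₀ ε : ℝ) : IsClosed (SS L s₀ ε) := by
  have h : IsClosed {t : ℝ | ε ≤ |t - s₀|} := isClosed_le (by fun_prop) (by fun_prop)
  exact isClosed_Icc.inter h

lemma SS_compact (L s₀ ε : ℝ) : IsCompact (SS L s₀ ε) :=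
  isCompact_Icc.of_isClosed_subset (SS_closed L s₀ ε) (fun _ h => h.1)

lemma SS_inv (L s₀ ε : ℝ) : ∫ t in SS L s₀ ε, (((t - s₀ : ℝ) : ℂ))⁻¹ = 0 := by
  have hm : MeasurePreserving (fun t : ℝ => 2 * s₀ - t) volume volume :=
    Measure.measurePreserving_sub_left volume (2 * s₀)
  have he : MeasurableEmbedding (fun t : ℝ => 2 * s₀ - t) :=
    (Homeomorph.subLeft (2 * s₀)).measurableEmbedding
  have h := hm.setIntegral_preimage_emb he (fun t => (((t - s₀ : ℝ) : ℂ))⁻¹) (SS L s₀ ε)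
  have hS : (fun t : ℝ => 2 * s₀ - t) ⁻¹' SS L s₀ ε = SS L s₀ ε := by
    ext t
    have : |2 * s₀ - t - s₀| = |t - s₀| := by rw [← abs_neg]; congr 1; ring
    simp only [SS, Set.mem_preimage, Set.mem_ofPred_eq, Set.mem_Icc, this]
    constructor <;> rintro ⟨⟨h1, h2⟩, h3⟩ <;> exact ⟨⟨by linarith, by linarith⟩, h3⟩
  rw [hS] at h
  have h2 : ∀ t : ℝ, (((2 * s₀ - t - s₀ : ℝ) : ℂ))⁻¹ = -(((t - s₀ : ℝ) : ℂ))⁻¹ := by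
    intro t
    rw [← inv_neg]; congr 1; push_cast; ring
  simp only [h2] at h
  rw [integral_neg] at h
  linear_combination (-1/2) * h

lemma SS_tendsto (L s₀ : ℝ) (C : ℝ → ℂ) (hC : Continuous C) :
    Tendsto (fun ε => ∫ t in SS L s₀ ε, C t) (𝓝[>] 0)
      (𝓝 (∫ t in Set.Icc (s₀ - L/2) (s₀ + L/2), C t)) := by
  have hi : IntegrableOn C (Set.Icc (s₀ - L/2) (s₀ + L/2)) :=
    hC.continuousOn.integrableOn_compact isCompact_Icc
  have e1 : ∀ ε, ∫ t in SS L s₀ ε, C t = ∫ t, (SS L s₀ ε).indicator C t := fun ε =>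
    (integral_indicator (SS_closed L s₀ ε).measurableSet).symm
  simp only [e1]
  rw [← integral_indicator measurableSet_Icc]
  refine tendsto_integral_filter_of_dominated_convergence
    (fun t => ‖(Set.Icc (s₀ - L/2) (s₀ + L/2)).indicator C t‖) ?_ ?_ ?_ ?_
  · exact Eventually.of_forall fun ε =>
      (hC.aestronglyMeasurable).indicator (SS_closed L s₀ ε).measurableSet
  · refine Eventually.of_forall fun ε => Eventually.of_forall fun t => ?_
    exact norm_indicator_le_of_subset (fun _ h => h.1) _ _
  · exact (hi.integrable_indicator measurableSet_Icc).norm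
  · have : ∀ᵐ t : ℝ, t ≠ s₀ := by
      simp [ae_iff]
    filter_upwards [this] with t ht
    apply tendsto_const_nhds.congr'
    have hpos : 0 < |t - s₀| := abs_pos.2 (sub_ne_zero.2 ht)
    filter_upwards [nhdsWithin_le_nhds (Iio_mem_nhds hpos)] with ε hε
    by_cases h : t ∈ Set.Icc (s₀ - L/2) (s₀ + L/2)
    · rw [Set.indicator_of_mem h, Set.indicator_of_mem (show t ∈ SS L s₀ ε from ⟨h, le_of_lt hε⟩)]
    · rw [Set.indicator_of_notMem h, Set.indicator_of_notMem (fun h' => h h'.1)]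

lemma vortex_eq (w : ℂ) : w / (‖w‖ : ℂ) ^ 2 = (starRingEnd ℂ) w⁻¹ := by
  by_cases h : w = 0
  · simp [h]
  have h' : (starRingEnd ℂ) w ≠ 0 := by simpa using h
  rw [← Complex.mul_conj', map_inv₀]
  field_simp

lemma dot_eq (a b : ℂ) : dotR a b / ‖a‖ ^ 2 = (b / a).re := by
  rw [← Complex.normSq_eq_norm_sq, Complex.div_re, dotR]; ring

lemma dot_eq' (a b : ℂ) : dotR a (-Complex.I * b) / ‖a‖ ^ 2 = (b / a).im := by
  rw [← Complex.normSq_eq_norm_sq, Complex.div_im, dotR]; simp; ring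

/-- The vortex identity: for `x` in the exterior domain and `y = l(s₀)` on the curve,
`π (x-y)^⊥/‖x-y‖²` equals the principal value integral of the tangential kernel against
the charge kernel minus the integral of the double layer kernel against the vortex
kernel. -/
theorem vortex_identity_exterior
    (L : ℝ) (hL : 0 < L) (l : ℝ → ℂ)
    (hsm : ContDiff ℝ (⊤ : ℕ∞) l) (hper : ∀ s, l (s + L) = l s)
    (harc : ∀ s, ‖deriv l s‖ = 1) (hinj : Set.InjOn l (Set.Ico 0 L))
    (horient : ∃ z₀ : ℂ, (∀ s, l s ≠ z₀) ∧
      (∫ t in (0:ℝ)..L, deriv l t / (l t - z₀)) = 2 * (π : ℂ) * Complex.I)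
    (x : ℂ) (hx : ∀ s, l s ≠ x)
    (hwind : (∫ t in (0:ℝ)..L, deriv l t / (l t - x)) = 0)
    (s₀ : ℝ) :
    Tendsto (fun ε : ℝ =>
        ∫ t in {t : ℝ | t ∈ Set.Icc (s₀ - L/2) (s₀ + L/2) ∧ ε ≤ |t - s₀|},
          (dotR (l s₀ - l t) (deriv l t) / ‖l s₀ - l t‖ ^ 2) •
            ((x - l t) / (‖x - l t‖ : ℂ) ^ 2))
      (𝓝[>] 0)
      (𝓝 (π • (Complex.I * (x - l s₀) / (‖x - l s₀‖ : ℂ) ^ 2)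
        + ∫ t in (0:ℝ)..L,
            Kdl l s₀ t • (Complex.I * (x - l t) / (‖x - l t‖ : ℂ) ^ 2))) := by
  have hlc := hsm.continuous
  have hlc1 := (sm1 hsm).continuous
  have hG := GG_cont' hL hsm hper harc hinj s₀
  have hPP := PP_eq hL hsm hper harc hinj horient x hx hwind s₀
  have hxl : ∀ t, x - l t ≠ 0 := fun t => sub_ne_zero.2 (hx t).symm
  have hlx : ∀ t, l t - x ≠ 0 := fun t => sub_ne_zero.2 (hx t)
  -- the Cauchy kernel near the singularity
  have hq : ∀ t ∈ Set.Icc (s₀ - L/2) (s₀ + L/2), t ≠ s₀ → l s₀ - l t ≠ 0 ∧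
      deriv l t / (l s₀ - l t) = -(((t - s₀ : ℝ) : ℂ))⁻¹ - GG L l s₀ (t - s₀) := by
    intro t ht hts
    have hu : t - s₀ ∈ Set.Icc (-(L/2)) (L/2) := ⟨by linarith [ht.1], by linarith [ht.2]⟩
    have hne := DD_ne hL hsm hper harc hinj s₀ _ (cl_abs hL (t - s₀))
    have hu0 : ((t - s₀ : ℝ) : ℂ) ≠ 0 := by exact_mod_cast sub_ne_zero.2 hts
    have e1 := DD_mul hsm s₀ (t - s₀)
    have e2 := DU_mul hsm s₀ (t - s₀)
    rw [add_sub_cancel] at e1 e2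
    unfold GG
    rw [cl_eq hu] at hne ⊢
    have e3 : l s₀ - l t = -(((t - s₀ : ℝ) : ℂ) * DD l s₀ (t - s₀)) := by rw [e1]; ring
    have e4 : deriv l t = ((t - s₀ : ℝ) : ℂ) * DU l s₀ (t - s₀) + DD l s₀ (t - s₀) := by
      rw [e2]; ring
    constructor
    · rw [e3]; exact neg_ne_zero.2 (mul_ne_zero hu0 hne)
    · rw [e3, e4]
      generalize ((t - s₀ : ℝ) : ℂ) = u at *
      field_simp; ring
  -- the continuous remainder
  set B : ℝ → ℂ := fun t => ((-(GG L l s₀ (t - s₀)).im : ℝ) : ℂ) *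
    (Complex.I * (starRingEnd ℂ) (x - l t)⁻¹) with hB
  set E : ℝ → ℂ := fun t => (-GG L l s₀ (t - s₀) + deriv l t / (l t - x)) / (x - l s₀) with hE
  have hinv : Continuous fun t => (x - l t)⁻¹ := Continuous.inv₀ (by fun_prop) hxl
  have hGs : Continuous fun t => GG L l s₀ (t - s₀) := hG.comp (by fun_prop)
  have hWc : Continuous fun t => deriv l t / (l t - x) := hlc1.div (by fun_prop) hlx
  have hBc : Continuous B := by
    refine Continuous.mul ?_ (continuous_const.mul (Complex.continuous_conj.comp hinv))
    exact Complex.continuous_ofReal.comp (Complex.continuous_im.comp hGs).neg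
  have hEc : Continuous E := (hGs.neg.add hWc).div_const _
  set C : ℝ → ℂ := fun t => B t + (starRingEnd ℂ) (E t) with hCdef
  have hCc : Continuous C := hBc.add (Complex.continuous_conj.comp hEc)
  have hpt : ∀ t ∈ Set.Icc (s₀ - L/2) (s₀ + L/2), t ≠ s₀ →
      (dotR (l s₀ - l t) (deriv l t) / ‖l s₀ - l t‖ ^ 2) •
            ((x - l t) / (‖x - l t‖ : ℂ) ^ 2) =
      C t - (starRingEnd ℂ) (x - l s₀)⁻¹ * (((t - s₀ : ℝ) : ℂ))⁻¹ := by
    intro t ht hts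
    obtain ⟨hne, hqt⟩ := hq t ht hts
    rw [vortex_eq, dot_eq, Complex.real_smul]
    have him : (-(GG L l s₀ (t - s₀)).im : ℝ) = (deriv l t / (l s₀ - l t)).im := by
      rw [hqt, ← Complex.ofReal_inv]; simp
    have hE' : E t - (x - l s₀)⁻¹ * (((t - s₀ : ℝ) : ℂ))⁻¹ =
        (deriv l t / (l s₀ - l t)) * (x - l t)⁻¹ := by
      have h1 : -GG L l s₀ (t - s₀) = deriv l t / (l s₀ - l t) + (((t - s₀ : ℝ) : ℂ))⁻¹ := by
        rw [hqt]; ring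
      simp only [hE, h1]
      have a1 := hxl t
      have a2 := hxl s₀
      have a3 : l t - x = -(x - l t) := by ring
      rw [a3]
      generalize (((t - s₀ : ℝ) : ℂ))⁻¹ = v
      field_simp
      ring
    have hE'' : (starRingEnd ℂ) (E t) =
        (starRingEnd ℂ) (deriv l t / (l s₀ - l t)) * (starRingEnd ℂ) (x - l t)⁻¹ +
        (starRingEnd ℂ) (x - l s₀)⁻¹ * (((t - s₀ : ℝ) : ℂ))⁻¹ := by
      rw [← map_mul, ← hE', map_sub, map_mul, ← Complex.ofReal_inv, Complex.conj_ofReal]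
      ring
    simp only [hCdef, hB, hE'', him]
    generalize deriv l t / (l s₀ - l t) = q
    have hqc : (starRingEnd ℂ) q = q.re - q.im * Complex.I := by
      apply Complex.ext <;> simp
    rw [hqc]; ring
  have hmain : ∀ ε > 0, ∫ t in SS L s₀ ε,
          (dotR (l s₀ - l t) (deriv l t) / ‖l s₀ - l t‖ ^ 2) •
            ((x - l t) / (‖x - l t‖ : ℂ) ^ 2) = ∫ t in SS L s₀ ε, C t := by
    intro ε hε
    have hneS : ∀ t ∈ SS L s₀ ε, t ≠ s₀ := by
      rintro t ⟨-, h⟩ rfl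
      simp at h; linarith
    rw [setIntegral_congr_fun (SS_closed L s₀ ε).measurableSet
      (fun t ht => hpt t ht.1 (hneS t ht))]
    rw [integral_sub, integral_const_mul, SS_inv, mul_zero, sub_zero]
    · exact hCc.continuousOn.integrableOn_compact (SS_compact L s₀ ε)
    · refine ContinuousOn.integrableOn_compact (SS_compact L s₀ ε) ?_
      refine continuousOn_const.mul (ContinuousOn.inv₀ ?_ ?_)
      · exact (Complex.continuous_ofReal.comp (by fun_prop)).continuousOn
      · intro t ht
        exact_mod_cast sub_ne_zero.2 (hneS t ht)
  have hlim := SS_tendsto L s₀ C hCc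
  have hval : ∫ t in Set.Icc (s₀ - L/2) (s₀ + L/2), C t =
      π • (Complex.I * (x - l s₀) / (‖x - l s₀‖ : ℂ) ^ 2)
        + ∫ t in (0:ℝ)..L,
            Kdl l s₀ t • (Complex.I * (x - l t) / (‖x - l t‖ : ℂ) ^ 2) := by
    have hle : s₀ - L/2 ≤ s₀ + L/2 := by linarith
    have hK : ∫ t in (0:ℝ)..L,
        Kdl l s₀ t • (Complex.I * (x - l t) / (‖x - l t‖ : ℂ) ^ 2) =
        ∫ t in (s₀ - L/2)..(s₀ + L/2), B t := by
      have hp : Function.Periodic (fun t =>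
          Kdl l s₀ t • (Complex.I * (x - l t) / (‖x - l t‖ : ℂ) ^ 2)) L := by
        intro t; simp only [Kdl, normalv, hper, per_deriv hper]
      have h := hp.intervalIntegral_add_eq 0 (s₀ - L/2)
      rw [zero_add, show s₀ - L/2 + L = s₀ + L/2 by ring] at h
      rw [h]
      apply intervalIntegral.integral_congr_ae
      have : ∀ᵐ t : ℝ, t ≠ s₀ := by simp [ae_iff]
      filter_upwards [this] with t hts ht
      rw [Set.uIoc_of_le hle] at ht
      obtain ⟨hne, hqt⟩ := hq t (Set.Ioc_subset_Icc_self ht) hts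
      have him : (-(GG L l s₀ (t - s₀)).im : ℝ) = (deriv l t / (l s₀ - l t)).im := by
        rw [hqt, ← Complex.ofReal_inv]; simp
      rw [Kdl, if_neg (sub_ne_zero.1 hne), normalv, dot_eq', mul_div_assoc, vortex_eq,
        Complex.real_smul]
      simp only [hB, him]
    have hEI : ∫ t in (s₀ - L/2)..(s₀ + L/2), E t = -(π * Complex.I) / (x - l s₀) := by
      simp only [hE]
      rw [intervalIntegral.integral_div, intervalIntegral.integral_add
        (f := fun t => -GG L l s₀ (t - s₀))
        (hGs.neg.intervalIntegrable _ _) (hWc.intervalIntegrable _ _),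
        intervalIntegral.integral_neg,
        intervalIntegral.integral_comp_sub_right (fun u => GG L l s₀ u)]
      have h1 : s₀ - L/2 - s₀ = -(L/2) := by ring
      have h2 : s₀ + L/2 - s₀ = L/2 := by ring
      have h3 : ∫ t in (s₀ - L/2)..(s₀ + L/2), deriv l t / (l t - x) = 0 := by
        have hp : Function.Periodic (fun t => deriv l t / (l t - x)) L := by
          intro t; simp only [hper, per_deriv hper]
        have h := hp.intervalIntegral_add_eq 0 (s₀ - L/2)
        rw [zero_add, show s₀ - L/2 + L = s₀ + L/2 by ring, hwind] at h
        exact h.symm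
      rw [h1, h2, h3, add_zero]
      rw [← hPP, PP]
    have hcE : ∫ t in (s₀ - L/2)..(s₀ + L/2), (starRingEnd ℂ) (E t) =
        (starRingEnd ℂ) (-(π * Complex.I) / (x - l s₀)) := by
      rw [← hEI, intervalIntegral.integral_of_le hle, intervalIntegral.integral_of_le hle,
        integral_conj]
    rw [integral_Icc_eq_integral_Ioc, ← intervalIntegral.integral_of_le hle]
    simp only [hCdef]
    rw [intervalIntegral.integral_add (g := fun t => (starRingEnd ℂ) (E t)) (hBc.intervalIntegrable _ _)
      ((Complex.continuous_conj.comp hEc).intervalIntegrable _ _), hK, add_comm]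
    congr 1
    refine hcE.trans ?_
    rw [mul_div_assoc, vortex_eq, Complex.real_smul, div_eq_mul_inv, map_mul]
    simp
    ring
  rw [← hval]
  refine hlim.congr' ?_
  filter_upwards [self_mem_nhdsWithin] with ε hε
  exact (hmain ε hε).symm
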